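/- Let q be a power of 2 and let F be a field of characteristic 2 containing F_q. Let L be a q-linearized polynomial of q-degree n in F[x] with distinct roots, and suppose (q, n) ≠ (2, 2). Then the Galois group of L over F, considered as a permutation group on the q^n − 1 roots of L(x)/x, is contained in the alternating group A_{q^n − 1}; that is, every element of the Galois group induces an even permutation of the roots of L(x)/x. -/

import Mathlib

open Matrix in
noncomputable def trU {n : Type} [Fintype n] [DecidableEq n] (i j : n) (h : i ≠ j) : GL n (ZMod 2) :=
  ⟨transvection i j 1, transvection i j (-1), by
    rw [transvection_mul_transvection_same _ _ h, add_neg_cancel, transvection_zero], by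
    rw [transvection_mul_transvection_same _ _ h, neg_add_cancel, transvection_zero]⟩

open Matrix in
noncomputable def psi (m : ℕ) : GL (Fin m) (ZMod 2) →* ℤˣ :=
  Equiv.Perm.sign.comp ((MulAction.toPermHom (LinearMap.GeneralLinearGroup (ZMod 2) (Fin m → ZMod 2)) (Fin m → ZMod 2)).comp
    (Matrix.GeneralLinearGroup.toLin (n := Fin m) (R := ZMod 2)).toMonoidHom)

open Matrix in
lemma comm_tr {n : Type} [Fintype n] [DecidableEq n] (i j k : n) (h : i ≠ j) (hik : i ≠ k) (hkj : k ≠ j) :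
    trU i k hik * trU k j hkj  = trU i j h * trU k j hkj * trU i k hik := by
  ext1
  simp [trU, transvection, mul_add, add_mul, h.symm, hkj.symm]
  abel

open Matrix in
lemma psi_one {m : ℕ} (hm : 3 ≤ m) (u : GL (Fin m) (ZMod 2)) : psi m u = 1 := by
  have key : ∀ M : Matrix (Fin m) (Fin m) (ZMod 2), M.det ≠ 0 →
      ∀ u : GL (Fin m) (ZMod 2), (u : Matrix _ _ _) = M → psi m u = 1 := by
    intro M hM
    refine Matrix.diagonal_transvection_induction_of_det_ne_zero
      (fun M => ∀ u : GL (Fin m) (ZMod 2), (u : Matrix _ _ _) = M → psi m u = 1) M hM ?_ ?_ ?_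
    · intro D hD u hu
      have : u = 1 := by
        ext1
        rw [hu]
        have : D = 1 := by
          funext i
          rw [Matrix.det_diagonal, Finset.prod_ne_zero_iff] at hD
          have := hD i (Finset.mem_univ _)
          change D i = 1
          revert this
          generalize D i = x
          revert x
          decide
        rw [this]; simp
      rw [this, map_one]
    · intro t u hu
      obtain ⟨i, j, hij, c⟩ := t
      have hc : c = 0 ∨ c = 1 := by clear hu; revert c; decide
      rcases hc with rfl | rfl
      · have : u = 1 := by ext1; rw [hu]; simp [TransvectionStruct.toMatrix]
        rw [this, map_one]
      · have hu' : u = trU i j hij := by ext1; rw [hu]; rfl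
        obtain ⟨k, hk⟩ : ∃ k : Fin m, k ∉ ({i, j} : Finset (Fin m)) := by
          by_contra! hcon
          have h1 : (Finset.univ : Finset (Fin m)) ⊆ {i, j} := fun x _ => hcon x
          have h2 := Finset.card_le_card h1
          have h3 := Finset.card_le_two (a := i) (b := j)
          simp at h2
          omega
        simp at hk
        have := congrArg (psi m) (comm_tr i j k hij (Ne.symm hk.1) hk.2)
        simp only [map_mul] at this
        rw [hu']
        rw [mul_assoc, mul_comm (psi m (trU k j _))] at this
        exact (right_eq_mul.mp this)
    · intro A B hA hB pA pB u hu
      have hu' : u = Matrix.GeneralLinearGroup.mkOfDetNeZero A hA * Matrix.GeneralLinearGroup.mkOfDetNeZero B hB := by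
        ext1; rw [hu]; rfl
      rw [hu', map_mul, pA _ rfl, pB _ rfl, mul_one]
  exact key _ (by simpa using (Matrix.isUnits_det_units u).ne_zero) u rfl

open Matrix in
lemma sign_add {V : Type} [AddCommGroup V] [Fintype V] [DecidableEq V] (h : ∀ x : V, x + x = 0)
    (hc : 8 ≤ Fintype.card V) (f : V ≃+ V) : Equiv.Perm.sign f.toEquiv = 1 := by
  let _ : Module (ZMod 2) V := AddCommGroup.zmodModule (n := 2) (fun x => by rw [two_nsmul, h])
  let e := (Module.finBasis (ZMod 2) V).equivFun
  have hm : 3 ≤ Module.finrank (ZMod 2) V := by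
    rw [Module.card_eq_pow_finrank (K := ZMod 2), ZMod.card] at hc
    exact (Nat.pow_le_pow_iff_right (a := 2) (by norm_num)).mp hc
  let fl : V ≃ₗ[ZMod 2] V := LinearEquiv.ofBijective (f.toAddMonoidHom.toZModLinearMap 2) f.bijective
  let g := (e.symm.trans fl).trans e
  let u : GL (Fin _) (ZMod 2) := Matrix.GeneralLinearGroup.toLin.symm ((LinearMap.GeneralLinearGroup.generalLinearEquiv _ _).symm g)
  have hu := psi_one hm u
  rw [← hu]
  simp only [psi, MonoidHom.comp_apply]
  apply Equiv.Perm.sign_eq_sign_of_equiv _ _ e.toEquiv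
  intro x
  simp [u]
  change _ = g (e x)
  simp [g, fl]

lemma aux_general
    (q n : ℕ) (Fq : Type) [Field Fq] [Fintype Fq] (hq : Fintype.card Fq = q)
    (h2 : ∃ e : ℕ, 0 < e ∧ q = 2 ^ e)
    (F : Type) [Field F] [Algebra Fq F] [CharP F 2]
    (a : ℕ → F) (han : a n ≠ 0)
    (L G : Polynomial F)
    (hL : L = ∑ i ∈ Finset.range (n + 1), Polynomial.C (a i) * Polynomial.X ^ q ^ i)
    (hG : G = ∑ i ∈ Finset.range (n + 1), Polynomial.C (a i) * Polynomial.X ^ (q ^ i - 1))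
    (hsep : L.Separable)
    (hexc : ¬(q = 2 ∧ n = 2)) (E : Type) [Field E] [Algebra F E]
    (hspl : (L.map (algebraMap F E)).Splits) (σ : E ≃ₐ[F] E) [DecidableEq (G.rootSet E)] :
    ∃ π : Equiv.Perm (G.rootSet E),
        (∀ x : G.rootSet E, (π x : E) = σ (x : E)) ∧ Equiv.Perm.sign π = 1 := by
  obtain ⟨e, he, hqe⟩ := h2
  have hq1 : 1 < q := by rw [hqe]; exact Nat.one_lt_two_pow he.ne'
  have hLG : L = Polynomial.X * G := by
    rw [hL, hG, Finset.mul_sum]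
    refine Finset.sum_congr rfl fun i _ => ?_
    have : 1 ≤ q ^ i := Nat.one_le_pow _ _ (by omega)
    rw [mul_left_comm, ← pow_succ', Nat.sub_add_cancel this]
  have hL0 : L ≠ 0 := hsep.ne_zero
  have hG0 : G ≠ 0 := by rintro rfl; simp [hLG] at hL0
  have : CharP E 2 := charP_of_injective_algebraMap (algebraMap F E).injective 2
  have hnz : ∀ x : E, Polynomial.aeval x G = 0 → x ≠ 0 := by
    rintro x hx rfl
    rw [hLG] at hsep
    obtain ⟨u, v, huv⟩ := hsep.isCoprime
    have := congrArg (Polynomial.aeval (0 : E)) huv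
    simp [hx] at this
  have hrt : ∀ x : E, x ∈ G.rootSet E ↔ Polynomial.aeval x G = 0 := fun x =>
    Polynomial.mem_rootSet_of_ne hG0
  have hLr : ∀ x : E, Polynomial.aeval x L = 0 ↔ x = 0 ∨ Polynomial.aeval x G = 0 := by
    intro x; rw [hLG]; simp
  have hσ : ∀ (p : Polynomial F) (x : E), Polynomial.aeval (σ x) p = σ (Polynomial.aeval x p) := by
    intro p x
    exact Polynomial.aeval_algHom_apply σ.toAlgHom x p
  have hσr : ∀ (p : Polynomial F) (x : E), Polynomial.aeval (σ x) p = 0 ↔ Polynomial.aeval x p = 0 := by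
    intro p x
    rw [hσ]; exact map_eq_zero_iff σ σ.injective
  let π : Equiv.Perm (G.rootSet E) :=
    Equiv.Perm.subtypePerm σ.toEquiv (fun x => by
      change σ x ∈ G.rootSet E ↔ x ∈ G.rootSet E
      rw [hrt, hrt, hσr])
  have hπ : ∀ x : G.rootSet E, (π x : E) = σ (x : E) := fun x => rfl
  refine ⟨π, hπ, ?_⟩
  clear_value π
  have hfin : ∀ k : ℕ, Odd k → π ^ k = 1 → Equiv.Perm.sign π = 1 := by
    intro k hk h
    have h1 := congrArg Equiv.Perm.sign h
    rw [map_pow, map_one] at h1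
    rcases Int.units_eq_one_or (Equiv.Perm.sign π) with h2 | h2
    · exact h2
    · rw [h2, hk.neg_one_pow] at h1
      exact absurd h1 (by decide)
  rcases Nat.lt_or_ge n 2 with hn | hn
  · interval_cases n
    · have : π = 1 := by
        ext x
        have := (hrt x).1 x.2
        simp [hG, han] at this
      rw [this, map_one]
    · refine hfin (q - 1) ?_ ?_
      · rw [hqe]
        exact Nat.Even.sub_odd Nat.one_le_two_pow ((Nat.even_pow.2 ⟨even_two, he.ne'⟩)) odd_one
      · ext x
        obtain ⟨x, hx⟩ := x
        have hx1 := (hrt x).1 hx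
        have hx0 := hnz x hx1
        have hsx := (hσr G x).2 hx1
        set z : E := σ x / x with hz
        have hzx : σ x = z * x := by rw [hz]; field_simp
        have ha1 : algebraMap F E (a 1) ≠ 0 := by simpa using han
        have hz1 : z ^ (q - 1) = 1 := by
          rw [hG] at hx1 hsx
          simp [Finset.sum_range_succ] at hx1 hsx
          have h3 : algebraMap F E (a 1) * (σ x) ^ (q - 1) = algebraMap F E (a 1) * x ^ (q - 1) := by
            linear_combination hsx - hx1
          have h4 := mul_left_cancel₀ ha1 h3
          rw [hz, div_pow, h4, div_self (pow_ne_zero _ hx0)]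
        have hzq : z ^ q = z := by
          have : z ^ (q - 1 + 1) = z := by rw [pow_succ, hz1, one_mul]
          rwa [Nat.sub_add_cancel hq1.le] at this
        obtain ⟨c, hc⟩ : ∃ c : Fq, algebraMap F E (algebraMap Fq F c) = z := by
          have hpr : (∏ c : Fq, (Polynomial.X - Polynomial.C c)) =
              Polynomial.X ^ Fintype.card Fq - Polynomial.X := by
            have hr := FiniteField.roots_X_pow_card_sub_X Fq
            have hd := FiniteField.X_pow_card_sub_X_natDegree_eq Fq (p := Fintype.card Fq)
              (by rw [hq]; exact hq1)
            have hm : (Polynomial.X ^ Fintype.card Fq - Polynomial.X : Polynomial Fq).Monic := by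
              apply Polynomial.monic_X_pow_sub
              rw [Polynomial.degree_X, hq]; exact_mod_cast hq1
            have := Polynomial.prod_multiset_X_sub_C_of_monic_of_roots_card_eq hm
              (by rw [hr, hd]; rfl)
            rw [hr] at this
            exact this
          have h5 := congrArg (Polynomial.eval₂ ((algebraMap F E).comp (algebraMap Fq F)) z) hpr
          rw [hq, Polynomial.eval₂_finsetProd] at h5
          simp [hzq] at h5
          obtain ⟨c, hc⟩ := Finset.prod_eq_zero_iff.1 h5
          exact ⟨c, (sub_eq_zero.1 hc.2).symm⟩
        have hσz : σ z = z := by rw [← hc]; exact AlgEquiv.commutes _ _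
        have hpow : ∀ k : ℕ, (((π ^ k) ⟨x, hx⟩ : G.rootSet E) : E) = z ^ k * x := by
          intro k
          induction k with
          | zero => simp
          | succ k ih =>
            rw [pow_succ', Equiv.Perm.mul_apply, hπ, ih, map_mul, map_pow, hσz, hzx]
            ring
        rw [hpow, hz1]; simp
  · have h8 : 8 ≤ q ^ n := by
      rcases Nat.lt_or_ge e 2 with h | h
      · have he1 : e = 1 := by omega
        subst he1
        have : 3 ≤ n := by
          by_contra hcon
          exact hexc ⟨by simpa using hqe, by omega⟩
        rw [hqe]
        calc 8 = 2 ^ 3 := by norm_num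
          _ ≤ 2 ^ n := Nat.pow_le_pow_right (by norm_num) this
          _ = (2 ^ 1) ^ n := by simp
      · calc 8 ≤ 2 ^ (2 * 2) := by norm_num
          _ ≤ 2 ^ (e * n) := Nat.pow_le_pow_right (by norm_num) (Nat.mul_le_mul h hn)
          _ = q ^ n := by rw [hqe, pow_mul]
    have hdeg : q ^ n ≤ L.natDegree := by
      apply Polynomial.le_natDegree_of_ne_zero
      rw [hL, Polynomial.finsetSum_coeff, Finset.sum_eq_single n]
      · simpa using han
      · intro i _ hi
        have : q ^ n ≠ q ^ i := fun h => hi (Nat.pow_right_injective hq1 h).symm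
        simp [Polynomial.coeff_X_pow, this]
      · simp
    have haev : ∀ x : E, Polynomial.aeval x L = ∑ i ∈ Finset.range (n + 1), algebraMap F E (a i) * x ^ q ^ i := by
      intro x; simp [hL]
    have hpadd : ∀ (x y : E) (i : ℕ), (x + y) ^ q ^ i = x ^ q ^ i + y ^ q ^ i := by
      intro x y i
      rw [hqe, ← pow_mul]
      exact add_pow_char_pow ..
    have hadd : ∀ x y : E, Polynomial.aeval (x + y) L = Polynomial.aeval x L + Polynomial.aeval y L := by
      intro x y
      simp only [haev, hpadd, mul_add, Finset.sum_add_distrib]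
    let V : AddSubgroup E :=
      { carrier := {x | Polynomial.aeval x L = 0}
        zero_mem' := (hLr 0).2 (Or.inl rfl)
        add_mem' := by
          intro x y hx hy
          change _ = _ at hx hy
          change _ = _
          rw [hadd, hx, hy, add_zero]
        neg_mem' := by
          intro x hx
          rw [CharTwo.neg_eq]; exact hx }
    have hV : ∀ x : E, x ∈ V ↔ Polynomial.aeval x L = 0 := fun x => Iff.rfl
    have hVr : ∀ x : E, x ∈ L.rootSet E ↔ x ∈ V := fun x => Polynomial.mem_rootSet_of_ne hL0
    let eV : L.rootSet E ≃ V := Equiv.subtypeEquivRight hVr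
    classical
    let _ : Fintype V := Fintype.ofEquiv _ eV
    have hcard : 8 ≤ Fintype.card V := by
      rw [← Fintype.card_congr eV, Polynomial.card_rootSet_eq_natDegree hsep hspl]
      exact h8.trans hdeg
    let f : V ≃+ V :=
      { Equiv.Perm.subtypePerm σ.toEquiv (p := fun x => x ∈ V) (fun x => by
          change σ x ∈ V ↔ x ∈ V
          rw [hV, hV, hσr]) with
        map_add' := fun x y => Subtype.ext (map_add σ (x : E) (y : E)) }
    have hf : ∀ x : V, (f x : E) = σ (x : E) := fun x => rfl
    have hs := sign_add (V := V) (fun x => Subtype.ext (CharTwo.add_self_eq_zero (x : E))) hcard f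
    have hf0 : ∀ x : V, f.toEquiv x ≠ 0 ↔ x ≠ 0 := fun x => (map_ne_zero_iff f f.injective)
    have hs2 := Equiv.Perm.sign_subtypePerm f.toEquiv (p := fun x : V => x ≠ 0) hf0
      (by rintro x hx rfl; exact hx (map_zero f))
    rw [← hs, ← hs2]
    let e2 : G.rootSet E ≃ {x : V // x ≠ 0} :=
      { toFun := fun x => ⟨⟨x, (hLr x).2 (Or.inr ((hrt x).1 x.2))⟩, fun h =>
          hnz x ((hrt x).1 x.2) (congrArg Subtype.val h)⟩
        invFun := fun x => ⟨x.1.1, (hrt _).2 (((hLr x.1.1).1 x.1.2).resolve_left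
          (fun h => x.2 (Subtype.ext h)))⟩
        left_inv := fun x => rfl
        right_inv := fun x => rfl }
    have hfinal := Equiv.Perm.sign_eq_sign_of_equiv π (Equiv.Perm.subtypePerm f.toEquiv hf0) e2
      (fun x => Subtype.ext (Subtype.ext (hπ x)))
    convert hfinal

/-- Let `q` be a power of `2` and `F` a field of characteristic `2`
containing `F_q`. Let `L` be a `q`-linearized polynomial of `q`-degree `n` over `F` with
distinct roots, and suppose `(q, n) ≠ (2, 2)`. Then every element of the Galois group of
`L` over `F` induces an even permutation of the `qⁿ − 1` roots of `L(x)/x`. -/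
theorem galois_group_even_on_roots_char_two
    (q n : ℕ) (Fq : Type) [Field Fq] [Fintype Fq] (hq : Fintype.card Fq = q)
    (h2 : ∃ e : ℕ, 0 < e ∧ q = 2 ^ e)
    (F : Type) [Field F] [Algebra Fq F] [CharP F 2]
    (a : ℕ → F) (han : a n ≠ 0)
    (L G : Polynomial F)
    (hL : L = ∑ i ∈ Finset.range (n + 1), Polynomial.C (a i) * Polynomial.X ^ q ^ i)
    (hG : G = ∑ i ∈ Finset.range (n + 1), Polynomial.C (a i) * Polynomial.X ^ (q ^ i - 1))
    (hsep : L.Separable)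
    (hexc : ¬(q = 2 ∧ n = 2)) :
    ∀ σ : L.Gal,
      haveI : DecidableEq (G.rootSet L.SplittingField) := Classical.decEq _
      ∃ π : Equiv.Perm (G.rootSet L.SplittingField),
        (∀ x : G.rootSet L.SplittingField, (π x : L.SplittingField) = σ (x : L.SplittingField)) ∧
        Equiv.Perm.sign π = 1 := by
  intro σ
  exact @aux_general q n Fq _ _ hq h2 F _ _ _ a han L G hL hG hsep hexc L.SplittingField _ _
    (Polynomial.SplittingField.splits L) σ (Classical.decEq _)
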